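/- Let R = ℂ[∂]V be a Lie conformal algebra with trivial left-center and Q = ℂ[∂]x a Leibniz conformal algebra free of rank 1 over ℂ[∂]. Then: (1) if Q is abelian, LHC²_R(Q,R) ≅ FC(R)/≡, where (D, T, Q₀, 0) ≡ (D', T', Q₀', 0) if and only if there exists β ∈ ℂ∖{0} such that T_λ − βT'_λ is an inner conformal derivation of R; (2) if Q is the Virasoro Lie conformal algebra ([x_λ x] = (∂+2λ)x), then LHC²_R(Q,R) = LHC²(Q,R) ≅ FC(R)/≈, where (D, T, Q₀, ∂+2λ) ≈ (D', T', Q₀', ∂+2λ) if and only if T_λ − T'_λ is an inner conformal derivation of R. -/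

import Mathlib

noncomputable section

/-- `g : ℂ → R` is (the evaluation of) a polynomial in `λ` with coefficients in `R`,
i.e. an element of `R[λ]`. -/
def IsPolyFun {R : Type*} [AddCommGroup R] [Module ℂ R] (g : ℂ → R) : Prop :=
  ∃ (N : ℕ) (c : ℕ → R), ∀ l : ℂ, g l = ∑ i ∈ Finset.range N, l ^ i • c i

/-- A conformal bilinear map `U × V → W[λ]`, in evaluated form: `f_λ(∂u, v) = -λ f_λ(u,v)`
and `f_λ(u, ∂v) = (∂ + λ) f_λ(u,v)`. -/
structure IsConformalBilin {U V W : Type*}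
    [AddCommGroup U] [Module ℂ U] [AddCommGroup V] [Module ℂ V]
    [AddCommGroup W] [Module ℂ W]
    (DU : Module.End ℂ U) (DV : Module.End ℂ V) (DW : Module.End ℂ W)
    (f : ℂ → U → V → W) : Prop where
  add_left : ∀ (l : ℂ) (a a' : U) (b : V), f l (a + a') b = f l a b + f l a' b
  smul_left : ∀ (l c : ℂ) (a : U) (b : V), f l (c • a) b = c • f l a b
  add_right : ∀ (l : ℂ) (a : U) (b b' : V), f l a (b + b') = f l a b + f l a b'
  smul_right : ∀ (l c : ℂ) (a : U) (b : V), f l a (c • b) = c • f l a b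
  poly : ∀ (a : U) (b : V), IsPolyFun (fun l => f l a b)
  conf_left : ∀ (l : ℂ) (a : U) (b : V), f l (DU a) b = (-l) • f l a b
  conf_right : ∀ (l : ℂ) (a : U) (b : V), f l a (DV b) = DW (f l a b) + l • f l a b

/-- A Leibniz conformal algebra structure on the `ℂ[∂]`-module `(R, D)`:
a conformal bilinear `λ`-bracket satisfying the Jacobi identity. -/
structure IsLeibnizConformal {R : Type*} [AddCommGroup R] [Module ℂ R]
    (D : Module.End ℂ R) (br : ℂ → R → R → R) : Prop where
  bilin : IsConformalBilin D D D br
  jacobi : ∀ (l m : ℂ) (a b c : R),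
    br l a (br m b c) = br (l + m) (br l a b) c + br m b (br l a c)

/-- An extending datum `Ω(R,Q) = (↼, ⇀, ◁, ▷, f, {·_λ·})` of a Leibniz conformal algebra
`R` by a `ℂ[∂]`-module `Q`: six conformal bilinear maps.  Here `lh = ↼`, `rh = ⇀`,
`lt = ◁`, `rt = ▷`, `fm = f`, `bq = {·_λ·}`. -/
structure IsExtendingDatum {R Q : Type*}
    [AddCommGroup R] [Module ℂ R] [AddCommGroup Q] [Module ℂ Q]
    (DR : Module.End ℂ R) (DQ : Module.End ℂ Q)
    (lh : ℂ → R → Q → R) (rh : ℂ → R → Q → Q)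
    (lt : ℂ → Q → R → Q) (rt : ℂ → Q → R → R)
    (fm : ℂ → Q → Q → R) (bq : ℂ → Q → Q → Q) : Prop where
  lh_bilin : IsConformalBilin DR DQ DR lh
  rh_bilin : IsConformalBilin DR DQ DQ rh
  lt_bilin : IsConformalBilin DQ DR DQ lt
  rt_bilin : IsConformalBilin DQ DR DR rt
  fm_bilin : IsConformalBilin DQ DQ DR fm
  bq_bilin : IsConformalBilin DQ DQ DQ bq

/-- The unified product bracket on `R × Q`:
`[(a,x)_λ (b,y)] = ([a_λ b] + a↼_λ y + x▷_λ b + f_λ(x,y), a⇀_λ y + x◁_λ b + {x_λ y})`. -/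
def unifiedBracket {R Q : Type*}
    [AddCommGroup R] [Module ℂ R] [AddCommGroup Q] [Module ℂ Q]
    (br : ℂ → R → R → R)
    (lh : ℂ → R → Q → R) (rh : ℂ → R → Q → Q)
    (lt : ℂ → Q → R → Q) (rt : ℂ → Q → R → R)
    (fm : ℂ → Q → Q → R) (bq : ℂ → Q → Q → Q) :
    ℂ → R × Q → R × Q → R × Q :=
  fun l p q =>
    (br l p.1 q.1 + lh l p.1 q.2 + rt l p.2 q.1 + fm l p.2 q.2,
     rh l p.1 q.2 + lt l p.2 q.1 + bq l p.2 q.2)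

/-- The extending datum `(lh, rh, lt, rt, fm, bq)` is obtained from
`(lh', rh', lt', rt', fm', bq')` via the pair `(u, v)` (Definition 3.5 of the paper). -/
def DatumEquivVia {R Q : Type*}
    [AddCommGroup R] [Module ℂ R] [AddCommGroup Q] [Module ℂ Q]
    (DR : Module.End ℂ R) (DQ : Module.End ℂ Q) (br : ℂ → R → R → R)
    (lh : ℂ → R → Q → R) (rh : ℂ → R → Q → Q)
    (lt : ℂ → Q → R → Q) (rt : ℂ → Q → R → R)
    (fm : ℂ → Q → Q → R) (bq : ℂ → Q → Q → Q)
    (lh' : ℂ → R → Q → R) (rh' : ℂ → R → Q → Q)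
    (lt' : ℂ → Q → R → Q) (rt' : ℂ → Q → R → R)
    (fm' : ℂ → Q → Q → R) (bq' : ℂ → Q → Q → Q)
    (u : Q →ₗ[ℂ] R) (v : Q ≃ₗ[ℂ] Q) : Prop :=
  (∀ q : Q, u (DQ q) = DR (u q)) ∧
  (∀ q : Q, v (DQ q) = DQ (v q)) ∧
  (∀ (l : ℂ) (a : R) (x : Q), rh l a x = v.symm (rh' l a (v x))) ∧
  (∀ (l : ℂ) (a : R) (x : Q),
      lh l a x = br l a (u x) + lh' l a (v x) - u (rh l a x)) ∧
  (∀ (l : ℂ) (x : Q) (a : R), lt l x a = v.symm (lt' l (v x) a)) ∧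
  (∀ (l : ℂ) (x : Q) (a : R),
      rt l x a = br l (u x) a + rt' l (v x) a - u (lt l x a)) ∧
  (∀ (l : ℂ) (x y : Q),
      bq l x y = v.symm (rh' l (u x) (v y)) + v.symm (lt' l (v x) (u y))
        + v.symm (bq' l (v x) (v y))) ∧
  (∀ (l : ℂ) (x y : Q),
      fm l x y = br l (u x) (u y) + lh' l (u x) (v y) + rt' l (v x) (u y)
        + fm' l (v x) (v y) - u (bq l x y))

open Polynomial in
/-- The polynomial ring `ℂ[λ, ∂]`, realized as `(ℂ[∂])[λ]`: the *outer* variable is `λ`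
and the *inner* variable is `∂`. -/
abbrev CPoly2 : Type := Polynomial (Polynomial ℂ)

open Polynomial in
/-- Substitute `λ := lam` and `∂ := del` (simultaneously) in `p ∈ ℂ[λ,∂]`; the result is a
polynomial in the remaining formal variable. -/
noncomputable def sub2 (p : CPoly2) (lam del : Polynomial ℂ) : Polynomial ℂ :=
  Polynomial.eval₂ (Polynomial.aeval del).toRingHom lam p

open Polynomial in
/-- Evaluate `p ∈ ℂ[λ,∂]` at `λ := lam`, `∂ := del` with `lam del : ℂ`. -/
noncomputable def ev2 (p : CPoly2) (lam del : ℂ) : ℂ :=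
  (p.eval (Polynomial.C lam)).eval del

open Polynomial in
/-- Substitute `λ := -λ - ∂` in `p ∈ ℂ[λ,∂]` (a formal substitution inside `ℂ[λ,∂]`). -/
noncomputable def twistL (p : CPoly2) : CPoly2 :=
  Polynomial.eval₂ (Polynomial.C : Polynomial ℂ →+* CPoly2)
    (-(Polynomial.X : CPoly2) - Polynomial.C Polynomial.X) p

/-- `IsNegShift D g g'` encodes, for polynomial functions `ℂ → R`, the formal identity
`g'(λ) = g(-λ-∂)`: there are coefficients `c i` of `g` such that
`g' l = ∑ (-l - ∂)^i (c i)`, where `∂` acts via `D`. -/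
def IsNegShift {R : Type*} [AddCommGroup R] [Module ℂ R] (D : Module.End ℂ R)
    (g g' : ℂ → R) : Prop :=
  ∃ (N : ℕ) (c : ℕ → R),
    (∀ l : ℂ, g l = ∑ i ∈ Finset.range N, l ^ i • c i) ∧
    (∀ l : ℂ, g' l = ∑ i ∈ Finset.range N,
      ((((-l) • (1 : Module.End ℂ R) - D)) ^ i) (c i))

open Polynomial

/-- The data of a 4-tuple `(D_λ, T_λ, Q₀(λ,∂), P(λ,∂))` on `R`: `Dm` is a left conformal
linear map, `Tm` is a conformal linear map, `Q₀ ∈ R[λ]` and `P ∈ ℂ[λ,∂]`. -/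
structure FCData (R : Type*) [AddCommGroup R] [Module ℂ R] (DR : Module.End ℂ R) where
  Dm : ℂ → R → R
  Tm : ℂ → R → R
  Q0 : ℂ → R
  P : CPoly2
  Dm_lin : ∀ l : ℂ, IsLinearMap ℂ (Dm l)
  Dm_poly : ∀ a : R, IsPolyFun (fun l => Dm l a)
  Dm_conf : ∀ (l : ℂ) (a : R), Dm l (DR a) = (-l) • Dm l a
  Tm_lin : ∀ l : ℂ, IsLinearMap ℂ (Tm l)
  Tm_poly : ∀ a : R, IsPolyFun (fun l => Tm l a)
  Tm_conf : ∀ (l : ℂ) (a : R), Tm l (DR a) = DR (Tm l a) + l • Tm l a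
  Q0_poly : IsPolyFun Q0

/-- The conditions (fc1)–(fc8) defining the set `FC(R)` of flag datums
`(D_λ, T_λ, Q₀(λ,∂), P(λ,∂))` used for crossed products. -/
def IsFC {R : Type*} [AddCommGroup R] [Module ℂ R] (DR : Module.End ℂ R)
    (br : ℂ → R → R → R) (F : FCData R DR) : Prop :=
  -- (fc1)
  (∀ (l m : ℂ) (a b : R),
    F.Dm (l + m) (br l a b) = br l a (F.Dm m b) - br m b (F.Dm l a)) ∧
  -- (fc2)
  (∀ (l m : ℂ) (a b : R),
    F.Tm m (br l a b) = br l a (F.Tm m b) - br (l + m) (F.Dm l a) b) ∧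
  -- (fc3)
  (∀ (l m : ℂ) (a b : R),
    F.Tm m (br l a b) = br l a (F.Tm m b) + br (l + m) (F.Tm m a) b) ∧
  -- (fc4)
  (∀ (l m : ℂ) (a : R),
    Polynomial.aeval DR (sub2 F.P (Polynomial.C m) (Polynomial.C l + Polynomial.X))
        (F.Dm l a)
      = F.Dm (l + m) (F.Dm l a) + F.Tm m (F.Dm l a) - br l a (F.Q0 m)) ∧
  -- (fc5)
  (∀ (l m : ℂ) (a : R), F.Dm (l + m) (F.Tm m a) + F.Dm (l + m) (F.Dm l a) = 0) ∧
  -- (fc6)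
  (∀ l m : ℂ,
    ev2 F.P l (-l - m) • sub2 F.P (Polynomial.C (l + m)) Polynomial.X
      + sub2 F.P (Polynomial.C l) (Polynomial.C m + Polynomial.X)
          * sub2 F.P (Polynomial.C m) Polynomial.X
      - sub2 F.P (Polynomial.C m) (Polynomial.C l + Polynomial.X)
          * sub2 F.P (Polynomial.C l) Polynomial.X = 0) ∧
  -- (fc7)
  (∀ (l m : ℂ) (a : R),
    ev2 F.P l (-l - m) • F.Tm (l + m) a
      = F.Tm l (F.Tm m a) - br (l + m) (F.Q0 l) a - F.Tm m (F.Tm l a)) ∧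
  -- (fc8)
  (∀ l m : ℂ,
    F.Tm l (F.Q0 m)
      = F.Dm (l + m) (F.Q0 l) + ev2 F.P l (-l - m) • F.Q0 (l + m) + F.Tm m (F.Q0 l)
        + Polynomial.aeval DR
            (sub2 F.P (Polynomial.C l) (Polynomial.C m + Polynomial.X)) (F.Q0 m)
        - Polynomial.aeval DR
            (sub2 F.P (Polynomial.C m) (Polynomial.C l + Polynomial.X)) (F.Q0 l))

/-- Conformal skew-symmetry `[a_λ b] = -[b_{-λ-∂} a]`; a Lie conformal algebra is a
Leibniz conformal algebra whose bracket is skew-symmetric. -/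
def IsSkewSymmBr {R : Type*} [AddCommGroup R] [Module ℂ R] (D : Module.End ℂ R)
    (br : ℂ → R → R → R) : Prop :=
  ∀ a b : R, IsNegShift D (fun l => br l a b) (fun l => -(br l b a))

open Polynomial in
/-- The polynomial `∂ + 2λ ∈ ℂ[λ,∂]` (inner variable `∂`, outer variable `λ`). -/
noncomputable def virasoroP : CPoly2 :=
  Polynomial.C Polynomial.X + (2 : ℂ) • Polynomial.X

/-- A crossed-product extending structure of `(R, DR, br)` by the Leibniz conformal
algebra `(Q, DQ, bq)`: an extending datum with `⇀` and `◁` trivial whose unified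
(= crossed) product is a Leibniz conformal algebra. -/
structure CrossedStruct (R Q : Type*)
    [AddCommGroup R] [Module ℂ R] [AddCommGroup Q] [Module ℂ Q]
    (DR : Module.End ℂ R) (DQ : Module.End ℂ Q)
    (br : ℂ → R → R → R) (bq : ℂ → Q → Q → Q) where
  lh : ℂ → R → Q → R
  rt : ℂ → Q → R → R
  fm : ℂ → Q → Q → R
  datum : IsExtendingDatum DR DQ lh (fun _ _ _ => 0) (fun _ _ _ => 0) rt fm bq
  leib : IsLeibnizConformal (LinearMap.prodMap DR DQ)
    (unifiedBracket br lh (fun _ _ _ => 0) (fun _ _ _ => 0) rt fm bq)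

/-- The relation `≡` on crossed-product extending structures (defining `LHC²_R(Q,R)`). -/
def crossedEquiv {R Q : Type*}
    [AddCommGroup R] [Module ℂ R] [AddCommGroup Q] [Module ℂ Q]
    (DR : Module.End ℂ R) (DQ : Module.End ℂ Q)
    (br : ℂ → R → R → R) (bq : ℂ → Q → Q → Q)
    (Ω Ω' : CrossedStruct R Q DR DQ br bq) : Prop :=
  ∃ (u : Q →ₗ[ℂ] R) (w : Q ≃ₗ[ℂ] Q),
    DatumEquivVia DR DQ br Ω.lh (fun _ _ _ => 0) (fun _ _ _ => 0) Ω.rt Ω.fm bq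
      Ω'.lh (fun _ _ _ => 0) (fun _ _ _ => 0) Ω'.rt Ω'.fm bq u w

/-- The relation `≈` on crossed-product extending structures (defining `LHC²(Q,R)`). -/
def crossedCohom {R Q : Type*}
    [AddCommGroup R] [Module ℂ R] [AddCommGroup Q] [Module ℂ Q]
    (DR : Module.End ℂ R) (DQ : Module.End ℂ Q)
    (br : ℂ → R → R → R) (bq : ℂ → Q → Q → Q)
    (Ω Ω' : CrossedStruct R Q DR DQ br bq) : Prop :=
  ∃ u : Q →ₗ[ℂ] R,
    DatumEquivVia DR DQ br Ω.lh (fun _ _ _ => 0) (fun _ _ _ => 0) Ω.rt Ω.fm bq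
      Ω'.lh (fun _ _ _ => 0) (fun _ _ _ => 0) Ω'.rt Ω'.fm bq u (LinearEquiv.refl ℂ Q)

/-- The relation on flag datums `(D,T,Q₀,0) ∈ FC(R)` in the abelian case:
`∃ β ≠ 0` with `T - βT'` an inner conformal derivation. -/
def fcRelAb {R : Type*} [AddCommGroup R] [Module ℂ R] (DR : Module.End ℂ R)
    (br : ℂ → R → R → R)
    (F F' : {F : FCData R DR // IsFC DR br F ∧ F.P = 0}) : Prop :=
  ∃ β : ℂ, β ≠ 0 ∧ ∃ c : R, ∀ (l : ℂ) (a : R),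
    F.1.Tm l a - β • F'.1.Tm l a = br l c a

/-- The relation on flag datums `(D,T,Q₀,∂+2λ) ∈ FC(R)` in the Virasoro case:
`T - T'` is an inner conformal derivation. -/
def fcRelVir {R : Type*} [AddCommGroup R] [Module ℂ R] (DR : Module.End ℂ R)
    (br : ℂ → R → R → R)
    (F F' : {F : FCData R DR // IsFC DR br F ∧ F.P = virasoroP}) : Prop :=
  ∃ c : R, ∀ (l : ℂ) (a : R), F.1.Tm l a - F'.1.Tm l a = br l c a

section Helpers

theorem IsPolyFun.add' {R : Type*} [AddCommGroup R] [Module ℂ R] {g h : ℂ → R}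
    (hg : IsPolyFun g) (hh : IsPolyFun h) : IsPolyFun (fun l => g l + h l) := by
  obtain ⟨N, c, hc⟩ := hg
  obtain ⟨M, d, hd⟩ := hh
  refine ⟨N + M, fun i => (if i < N then c i else 0) + (if i < M then d i else 0), fun l => ?_⟩
  simp only [smul_add, Finset.sum_add_distrib, hc, hd]
  congr 1
  · rw [Finset.sum_range_add]
    rw [Finset.sum_congr rfl (g := fun i => l ^ i • (if i < N then c i else 0))]
    · simp
    · intro i hi
      simp [Finset.mem_range.1 hi]
  · rw [add_comm N M, Finset.sum_range_add]
    rw [Finset.sum_congr rfl (g := fun i => l ^ i • (if i < M then d i else 0))]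
    · simp
    · intro i hi
      simp [Finset.mem_range.1 hi]

theorem IsPolyFun.map' {R S : Type*} [AddCommGroup R] [Module ℂ R] [AddCommGroup S] [Module ℂ S]
    {g : ℂ → R} (hg : IsPolyFun g) (f : R →ₗ[ℂ] S) : IsPolyFun (fun l => f (g l)) := by
  obtain ⟨N, c, hc⟩ := hg
  exact ⟨N, fun i => f (c i), fun l => by simp [hc, map_sum]⟩

theorem IsPolyFun.csmul' {R : Type*} [AddCommGroup R] [Module ℂ R]
    {g : ℂ → R} (hg : IsPolyFun g) (k : ℂ) : IsPolyFun (fun l => k • g l) :=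
  hg.map' (k • LinearMap.id)

theorem IsPolyFun.lsmul' {R : Type*} [AddCommGroup R] [Module ℂ R]
    {g : ℂ → R} (hg : IsPolyFun g) : IsPolyFun (fun l => l • g l) := by
  obtain ⟨N, c, hc⟩ := hg
  refine ⟨N + 1, fun i => Nat.casesOn i 0 c, fun l => ?_⟩
  rw [Finset.sum_range_succ']
  simp [hc, Finset.smul_sum, smul_smul, pow_succ']

theorem IsPolyFun.zero' {R : Type*} [AddCommGroup R] [Module ℂ R] :
    IsPolyFun (fun _ : ℂ => (0 : R)) := ⟨0, fun _ => 0, fun l => by simp⟩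

namespace IsConformalBilin
variable {U V W : Type*} [AddCommGroup U] [Module ℂ U] [AddCommGroup V] [Module ℂ V]
    [AddCommGroup W] [Module ℂ W]
    {DU : Module.End ℂ U} {DV : Module.End ℂ V} {DW : Module.End ℂ W}
    {f : ℂ → U → V → W}

theorem zero_left (h : IsConformalBilin DU DV DW f) (l : ℂ) (b : V) : f l 0 b = 0 := by
  simpa using h.smul_left l 0 0 b
theorem zero_right (h : IsConformalBilin DU DV DW f) (l : ℂ) (a : U) : f l a 0 = 0 := by
  simpa using h.smul_right l 0 a 0
theorem sub_left (h : IsConformalBilin DU DV DW f) (l : ℂ) (a a' : U) (b : V) :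
    f l (a - a') b = f l a b - f l a' b := by
  have := h.add_left l (a - a') a' b
  rw [sub_add_cancel] at this
  rw [this]; abel
theorem aeval_left (h : IsConformalBilin DU DV DW f) (l : ℂ) (p : ℂ[X]) (a : U) (b : V) :
    f l (Polynomial.aeval DU p a) b = p.eval (-l) • f l a b := by
  induction p using Polynomial.induction_on with
  | C k => simp [h.smul_left]
  | add p q hp hq => simp [h.add_left, hp, hq, add_smul]
  | monomial n k ih =>
    have : (C k * X ^ (n + 1) : ℂ[X]) = X * (C k * X ^ n) := by ring
    rw [this, map_mul, Module.End.mul_apply, aeval_X, h.conf_left, ih, eval_mul (p := X), eval_X, smul_smul]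
theorem aeval_right (h : IsConformalBilin DU DV DW f) (l : ℂ) (p : ℂ[X]) (a : U) (b : V) :
    f l a (Polynomial.aeval DV p b) = Polynomial.aeval DW (p.comp (C l + X)) (f l a b) := by
  induction p using Polynomial.induction_on with
  | C k => simp [h.smul_right]
  | add p q hp hq => simp [h.add_right, hp, hq]
  | monomial n k ih =>
    have : (C k * X ^ (n + 1) : ℂ[X]) = X * (C k * X ^ n) := by ring
    rw [this, map_mul, Module.End.mul_apply, aeval_X, h.conf_right, ih,
      show (X * (C k * X ^ n) : ℂ[X]).comp (C l + X) = (C l + X) * (C k * X ^ n : ℂ[X]).comp (C l + X) by simp,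
      map_mul (aeval DW) (C l + X), Module.End.mul_apply, map_add, LinearMap.add_apply, aeval_X, aeval_C,
      Module.algebraMap_end_apply, add_comm]
theorem zero : IsConformalBilin DU DV DW (fun _ _ _ => 0) where
  add_left := by simp
  smul_left := by simp
  add_right := by simp
  smul_right := by simp
  poly := fun _ _ => IsPolyFun.zero'
  conf_left := by simp
  conf_right := by simp
end IsConformalBilin

theorem sub2_shift (P : CPoly2) (l m : ℂ) :
    sub2 P (C m) (C l + X) = (sub2 P (C m) X).comp (C l + X) := by
  unfold sub2
  rw [← coe_compRingHom_apply, hom_eval₂]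
  congr 1
  · ext <;> simp
  · simp

theorem ev2_eq (P : CPoly2) (l t : ℂ) : ev2 P l t = (sub2 P (C l) X).eval t := by
  unfold ev2 sub2
  congr 1
  have : (aeval (X : ℂ[X])).toRingHom = RingHom.id ℂ[X] := by ext <;> simp
  rw [this]; rfl

/-- induction principle -/
def GenBy {M : Type*} [AddCommGroup M] [Module ℂ M] (D : Module.End ℂ M) (S : Set M) : Prop :=
  ∀ p : M → Prop, (∀ s ∈ S, p s) → (∀ a b, p a → p b → p (a + b)) →
    (∀ (c : ℂ) a, p a → p (c • a)) → (∀ a, p a → p (D a)) → ∀ a, p a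

theorem jac_gen {M : Type*} [AddCommGroup M] [Module ℂ M] {D : Module.End ℂ M}
    {br : ℂ → M → M → M} (hb : IsConformalBilin D D D br) {S : Set M} (hS : GenBy D S)
    (hj : ∀ l m : ℂ, ∀ a ∈ S, ∀ b ∈ S, ∀ c ∈ S,
      br l a (br m b c) = br (l + m) (br l a b) c + br m b (br l a c)) :
    IsLeibnizConformal D br := by
  refine ⟨hb, fun l m a b c => ?_⟩
  revert a b c
  refine hS _ ?_ ?_ ?_ ?_
  · intro a ha
    refine hS _ ?_ ?_ ?_ ?_
    · intro b hb'
      refine hS _ ?_ ?_ ?_ ?_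
      · intro c hc
        exact hj l m a ha b hb' c hc
      · intro c c' h h'
        simp only [hb.add_right, h, h']; abel
      · intro k c h
        simp only [hb.smul_right, h, smul_add]
      · intro c h
        simp only [hb.add_right, hb.smul_right, hb.conf_right, h, map_add]
        module
    · intro b b' h h' c
      simp only [hb.add_right, hb.add_left, h, h']; abel
    · intro k b h c
      simp only [hb.smul_right, hb.smul_left, h, smul_add]
    · intro b h c
      simp only [hb.add_left, hb.smul_left, hb.smul_right, hb.conf_right, hb.conf_left, h]
      module
  · intro a a' h h' b c
    simp only [hb.add_right, hb.add_left, h, h']; abel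
  · intro k b h a c
    simp only [hb.smul_right, hb.smul_left, h, smul_add]
  · intro a h b c
    simp only [hb.smul_left, hb.smul_right, hb.conf_left, h]
    module

theorem gen_x {Q : Type*} [AddCommGroup Q] [Module ℂ Q] {DQ : Module.End ℂ Q} {x : Q}
    (hQfree : ∀ q : Q, ∃! p : Polynomial ℂ, Polynomial.aeval DQ p x = q) : GenBy DQ {x} := by
  intro P hx hadd hsmul hD q
  obtain ⟨p, rfl, -⟩ := hQfree q
  induction p using Polynomial.induction_on with
  | C k => simpa using hsmul k x (hx x rfl)
  | add p q hp hq => simpa using hadd _ _ hp hq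
  | monomial n k ih =>
    have : (C k * X ^ (n + 1) : ℂ[X]) = X * (C k * X ^ n) := by ring
    rw [this, map_mul, Module.End.mul_apply, aeval_X]
    exact hD _ ih

theorem gen_prod {R Q : Type*} [AddCommGroup R] [Module ℂ R] [AddCommGroup Q] [Module ℂ Q]
    (DR : Module.End ℂ R) {DQ : Module.End ℂ Q} {x : Q} (h : GenBy DQ {x}) :
    GenBy (LinearMap.prodMap DR DQ) (Set.range (fun a : R => ((a, 0) : R × Q)) ∪ {((0, x) : R × Q)}) := by
  intro P hx hadd hsmul hD q
  obtain ⟨a, q⟩ := q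
  have h1 : P (a, 0) := hx _ (Or.inl ⟨a, rfl⟩)
  have h2 : P (0, q) := by
    refine h (fun q => P (0, q)) ?_ ?_ ?_ ?_ q
    · rintro s rfl
      exact hx _ (Or.inr rfl)
    · intro a b ha hb
      simpa using hadd _ _ ha hb
    · intro c a ha
      simpa using hsmul c _ ha
    · intro a ha
      simpa using hD _ ha
  simpa using hadd _ _ h1 h2

section coord
variable {Q : Type*} [AddCommGroup Q] [Module ℂ Q] {DQ : Module.End ℂ Q} {x : Q}

theorem exists_coord (hQfree : ∀ q : Q, ∃! p : Polynomial ℂ, Polynomial.aeval DQ p x = q) :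
    ∃ κ : Q →ₗ[ℂ] ℂ[X], (∀ q, Polynomial.aeval DQ (κ q) x = q) ∧ κ x = 1 ∧
      ∀ q, κ (DQ q) = X * κ q := by
  let φ : ℂ[X] →ₗ[ℂ] Q := (LinearMap.applyₗ x).comp (Polynomial.aeval DQ).toLinearMap
  have hφ : ∀ p, φ p = Polynomial.aeval DQ p x := fun p => rfl
  have hb : Function.Bijective φ := by
    constructor
    · intro p q hpq
      exact (hQfree (φ q)).unique hpq rfl
    · intro q
      obtain ⟨p, hp, -⟩ := hQfree q
      exact ⟨p, hp⟩
  let e := LinearEquiv.ofBijective φ hb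
  have he : ∀ q, φ (e.symm q) = q := fun q => e.apply_symm_apply q
  refine ⟨e.symm, he, ?_, ?_⟩
  · apply hb.1
    show φ (e.symm x) = _
    rw [he, hφ]; simp
  · intro q
    apply hb.1
    show φ (e.symm (DQ q)) = _
    rw [he, hφ, map_mul, Module.End.mul_apply, aeval_X]
    show _ = DQ (φ (e.symm q))
    rw [he]

end coord

theorem unified_bilin {R Q : Type*} [AddCommGroup R] [Module ℂ R] [AddCommGroup Q] [Module ℂ Q]
    {DR : Module.End ℂ R} {DQ : Module.End ℂ Q} {br : ℂ → R → R → R}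
    (hbr : IsConformalBilin DR DR DR br)
    {lh : ℂ → R → Q → R} {rh : ℂ → R → Q → Q}
    {lt : ℂ → Q → R → Q} {rt : ℂ → Q → R → R}
    {fm : ℂ → Q → Q → R} {bq : ℂ → Q → Q → Q}
    (h : IsExtendingDatum DR DQ lh rh lt rt fm bq) :
    IsConformalBilin (LinearMap.prodMap DR DQ) (LinearMap.prodMap DR DQ) (LinearMap.prodMap DR DQ)
      (unifiedBracket br lh rh lt rt fm bq) := by
  obtain ⟨h1, h2, h3, h4, h5, h6⟩ := h
  constructor
  · intro l a a' b
    ext <;> simp only [unifiedBracket, Prod.fst_add, Prod.snd_add, hbr.add_left, h1.add_left, h2.add_left, h3.add_left,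
      h4.add_left, h5.add_left, h6.add_left] <;> abel
  · intro l c a b
    ext <;> simp only [unifiedBracket, Prod.smul_fst, Prod.smul_snd, hbr.smul_left, h1.smul_left, h2.smul_left, h3.smul_left,
      h4.smul_left, h5.smul_left, h6.smul_left, smul_add]
  · intro l a a' b
    ext <;> simp only [unifiedBracket, Prod.fst_add, Prod.snd_add, hbr.add_right, h1.add_right, h2.add_right, h3.add_right,
      h4.add_right, h5.add_right, h6.add_right] <;> abel
  · intro l c a b
    ext <;> simp only [unifiedBracket, Prod.smul_fst, Prod.smul_snd, hbr.smul_right, h1.smul_right, h2.smul_right, h3.smul_right,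
      h4.smul_right, h5.smul_right, h6.smul_right, smul_add]
  · intro a b
    have e1 := (((hbr.poly a.1 b.1).add' (h1.poly a.1 b.2)).add' (h4.poly a.2 b.1)).add'
      (h5.poly a.2 b.2)
    have e2 := ((h2.poly a.1 b.2).add' (h3.poly a.2 b.1)).add' (h6.poly a.2 b.2)
    have e := (e1.map' (LinearMap.inl ℂ R Q)).add' (e2.map' (LinearMap.inr ℂ R Q))
    simpa [unifiedBracket] using e
  · intro l a b
    ext <;> simp only [unifiedBracket, LinearMap.prodMap_apply, Prod.smul_fst, Prod.smul_snd, hbr.conf_left, h1.conf_left, h2.conf_left, h3.conf_left,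
      h4.conf_left, h5.conf_left, h6.conf_left, smul_add]
  · intro l a b
    ext <;> simp only [unifiedBracket, LinearMap.prodMap_apply, Prod.fst_add, Prod.snd_add, Prod.smul_fst, Prod.smul_snd, hbr.conf_right, h1.conf_right, h2.conf_right, h3.conf_right,
      h4.conf_right, h5.conf_right, h6.conf_right, smul_add, map_add] <;> abel

section main
variable {R Q : Type*} [AddCommGroup R] [Module ℂ R] [AddCommGroup Q] [Module ℂ Q]
    {DR : Module.End ℂ R} {DQ : Module.End ℂ Q}
    {br : ℂ → R → R → R} {bq : ℂ → Q → Q → Q} {x : Q}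

/-- flag datum of a crossed structure -/
def toFC (P : CPoly2) (x : Q) (Ω : CrossedStruct R Q DR DQ br bq) : FCData R DR where
  Dm l a := Ω.lh l a x
  Tm l a := Ω.rt l x a
  Q0 l := Ω.fm l x x
  P := P
  Dm_lin l := ⟨fun a b => Ω.datum.lh_bilin.add_left l a b x,
    fun c a => Ω.datum.lh_bilin.smul_left l c a x⟩
  Dm_poly a := Ω.datum.lh_bilin.poly a x
  Dm_conf l a := Ω.datum.lh_bilin.conf_left l a x
  Tm_lin l := ⟨fun a b => Ω.datum.rt_bilin.add_right l x a b,
    fun c a => Ω.datum.rt_bilin.smul_right l c x a⟩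
  Tm_poly a := Ω.datum.rt_bilin.poly x a
  Tm_conf l a := Ω.datum.rt_bilin.conf_right l x a
  Q0_poly := Ω.datum.fm_bilin.poly x x

theorem fc6_of (hQfree : ∀ q : Q, ∃! p : Polynomial ℂ, Polynomial.aeval DQ p x = q)
    (hbq : IsLeibnizConformal DQ bq) {P : CPoly2}
    (hP : ∀ l, bq l x x = Polynomial.aeval DQ (sub2 P (C l) X) x) (l m : ℂ) :
    ev2 P l (-l - m) • sub2 P (Polynomial.C (l + m)) Polynomial.X
      + sub2 P (Polynomial.C l) (Polynomial.C m + Polynomial.X)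
          * sub2 P (Polynomial.C m) Polynomial.X
      - sub2 P (Polynomial.C m) (Polynomial.C l + Polynomial.X)
          * sub2 P (Polynomial.C l) Polynomial.X = 0 := by
  have h := hbq.jacobi l m x x x
  simp only [hP, hbq.bilin.aeval_left, hbq.bilin.aeval_right] at h
  apply (hQfree 0).unique _ (by simp)
  simp only [sub2_shift, ev2_eq, map_add, map_sub, map_mul, map_smul, LinearMap.add_apply,
    LinearMap.sub_apply, LinearMap.smul_apply, Module.End.mul_apply, h]
  rw [show -(l + m) = -l - m by ring]
  abel

theorem toFC_isFC (hLeib : IsLeibnizConformal DR br)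
    (hQfree : ∀ q : Q, ∃! p : Polynomial ℂ, Polynomial.aeval DQ p x = q)
    (hbq : IsLeibnizConformal DQ bq) {P : CPoly2}
    (hP : ∀ l, bq l x x = Polynomial.aeval DQ (sub2 P (C l) X) x)
    (Ω : CrossedStruct R Q DR DQ br bq) : IsFC DR br (toFC P x Ω) := by
  have hlh := Ω.datum.lh_bilin
  have hrt := Ω.datum.rt_bilin
  have hfm := Ω.datum.fm_bilin
  have hb := hLeib.bilin
  have hq := hbq.bilin
  have J : ∀ l m a b c, _ := Ω.leib.jacobi
  have K : ∀ l m a b c, _ := fun l m a b c => congrArg Prod.fst (J l m a b c)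
  simp only [unifiedBracket, Prod.fst_add] at K
  have k1 : ∀ l m a b, _ := fun l m a b => K l m (a, 0) (b, 0) (0, x)
  have k2 : ∀ l m a b, _ := fun l m a b => K l m (a, 0) (0, x) (b, 0)
  have k3 : ∀ l m a b, _ := fun l m a b => K m l (0, x) (a, 0) (b, 0)
  have k4 : ∀ l m a, _ := fun l m a => K l m (a, 0) (0, x) (0, x)
  have k5 : ∀ l m a, _ := fun l m a => K m l (0, x) (a, 0) (0, x)
  have k7 : ∀ l m a, _ := fun l m a => K l m (0, x) (0, x) (a, 0)
  have k8 : ∀ l m, _ := fun l m => K l m (0, x) (0, x) (0, x)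
  clear K J
  simp only [hb.zero_left, hb.zero_right, hlh.zero_left, hlh.zero_right, hrt.zero_left,
    hrt.zero_right, hfm.zero_left, hfm.zero_right, hq.zero_left, hq.zero_right, add_zero,
    zero_add, hP, hlh.aeval_right, hrt.aeval_left, hfm.aeval_left, hfm.aeval_right] at k1 k2 k3 k4 k5 k7 k8
  refine ⟨fun l m a b => ?_, fun l m a b => ?_, fun l m a b => ?_, fun l m a => ?_,
    fun l m a => ?_, fc6_of hQfree hbq hP, fun l m a => ?_, fun l m => ?_⟩ <;>
    simp only [toFC, sub2_shift, ev2_eq]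
  · rw [k1]; abel
  · rw [k2]; abel
  · rw [k3, add_comm m l]; abel
  · have := k4 l m a
    rw [← this]; abel
  · have h4 := k4 l m a
    have h5 := k5 l m a
    rw [add_comm m l] at h5
    rw [h4] at h5
    have h6 := sub_eq_zero.2 h5
    have : Ω.lh (l + m) (Ω.rt m x a) x + Ω.lh (l + m) (Ω.lh l a x) x =
      -(Ω.rt m x (Ω.lh l a x) - (Ω.lh (l + m) (Ω.rt m x a) x +
        (Ω.lh (l + m) (Ω.lh l a x) x + Ω.rt m x (Ω.lh l a x)))) := by abel
    rw [this, h6, neg_zero]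
  · have := k7 l m a
    rw [this, show -(l + m) = -l - m by ring]; abel
  · have := k8 l m
    rw [show -(l + m) = -l - m by ring] at this
    rw [← sub_eq_zero] at this ⊢
    rw [← this]; abel

theorem fcdata_ext {F G : FCData R DR} (h1 : ∀ l a, F.Dm l a = G.Dm l a)
    (h2 : ∀ l a, F.Tm l a = G.Tm l a) (h3 : ∀ l, F.Q0 l = G.Q0 l) (h4 : F.P = G.P) : F = G := by
  cases F; cases G
  simp only [FCData.mk.injEq]
  exact ⟨funext fun l => funext fun a => h1 l a, funext fun l => funext fun a => h2 l a,
    funext h3, h4⟩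

theorem crossed_ext {F G : CrossedStruct R Q DR DQ br bq} (h1 : ∀ l a y, F.lh l a y = G.lh l a y)
    (h2 : ∀ l y a, F.rt l y a = G.rt l y a) (h3 : ∀ l y z, F.fm l y z = G.fm l y z) : F = G := by
  cases F; cases G
  simp only [CrossedStruct.mk.injEq]
  exact ⟨funext fun l => funext fun a => funext fun y => h1 l a y,
    funext fun l => funext fun a => funext fun y => h2 l a y,
    funext fun l => funext fun a => funext fun y => h3 l a y⟩

theorem toFC_inj (hQfree : ∀ q : Q, ∃! p : Polynomial ℂ, Polynomial.aeval DQ p x = q)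
    {P : CPoly2} {Ω Ω' : CrossedStruct R Q DR DQ br bq} (h : toFC P x Ω = toFC P x Ω') :
    Ω = Ω' := by
  have h1 : ∀ l a, Ω.lh l a x = Ω'.lh l a x := fun l a => congrFun (congrFun (congrArg FCData.Dm h) l) a
  have h2 : ∀ l a, Ω.rt l x a = Ω'.rt l x a := fun l a => congrFun (congrFun (congrArg FCData.Tm h) l) a
  have h3 : ∀ l, Ω.fm l x x = Ω'.fm l x x := fun l => congrFun (congrArg FCData.Q0 h) l
  have G := hQfree
  apply crossed_ext
  · intro l a y
    obtain ⟨p, rfl, -⟩ := hQfree y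
    rw [Ω.datum.lh_bilin.aeval_right, Ω'.datum.lh_bilin.aeval_right, h1]
  · intro l y a
    obtain ⟨p, rfl, -⟩ := hQfree y
    rw [Ω.datum.rt_bilin.aeval_left, Ω'.datum.rt_bilin.aeval_left, h2]
  · intro l y z
    obtain ⟨p, rfl, -⟩ := hQfree y
    obtain ⟨q, rfl, -⟩ := hQfree z
    rw [Ω.datum.fm_bilin.aeval_left, Ω'.datum.fm_bilin.aeval_left,
      Ω.datum.fm_bilin.aeval_right, Ω'.datum.fm_bilin.aeval_right, h3]

theorem toFC_surj (hLeib : IsLeibnizConformal DR br)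
    (hQfree : ∀ q : Q, ∃! p : Polynomial ℂ, Polynomial.aeval DQ p x = q)
    (hbq : IsLeibnizConformal DQ bq)
    (F : FCData R DR) (hF : IsFC DR br F)
    (hP : ∀ l, bq l x x = Polynomial.aeval DQ (sub2 F.P (C l) X) x) :
    ∃ Ω : CrossedStruct R Q DR DQ br bq, toFC F.P x Ω = F := by
  obtain ⟨κ, hκ, hκ1, hκD⟩ := exists_coord hQfree
  have hg := gen_x hQfree
  let lh : ℂ → R → Q → R := fun l a y => aeval DR ((κ y).comp (C l + X)) (F.Dm l a)
  let rt : ℂ → Q → R → R := fun l y a => (κ y).eval (-l) • F.Tm l a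
  let fm : ℂ → Q → Q → R := fun l y z => (κ y).eval (-l) • aeval DR ((κ z).comp (C l + X)) (F.Q0 l)
  have sh : ∀ (l : ℂ) (y : Q) (r : R), aeval DR ((κ (DQ y)).comp (C l + X)) r =
      DR (aeval DR ((κ y).comp (C l + X)) r) + l • aeval DR ((κ y).comp (C l + X)) r := by
    intro l y r
    rw [hκD, mul_comp, X_comp, map_mul, Module.End.mul_apply]
    simp [add_comm]
  have polyR : ∀ (g : ℂ → R), IsPolyFun g → ∀ y : Q,
      IsPolyFun (fun l => aeval DR ((κ y).comp (C l + X)) (g l)) := by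
    intro g hgp
    refine hg _ ?_ ?_ ?_ ?_
    · rintro s rfl
      simpa [hκ1] using hgp
    · intro a b ha hb
      simpa using ha.add' hb
    · intro c a ha
      simpa using ha.csmul' c
    · intro a ha
      simp only [sh]
      exact (ha.map' DR).add' ha.lsmul'
  have polyL : ∀ (g : ℂ → R), IsPolyFun g → ∀ y : Q,
      IsPolyFun (fun l => (κ y).eval (-l) • (g l)) := by
    intro g hgp
    refine hg _ ?_ ?_ ?_ ?_
    · rintro s rfl
      simpa [hκ1] using hgp
    · intro a b ha hb
      simpa [add_smul] using ha.add' hb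
    · intro c a ha
      simpa [mul_smul] using ha.csmul' c
    · intro a ha
      simpa [hκD, mul_smul] using ha.lsmul'.csmul' (-1)
  have hlh : IsConformalBilin DR DQ DR lh := by
    refine ⟨?_, ?_, ?_, ?_, fun a y => polyR _ (F.Dm_poly a) y, ?_, fun l a b => sh _ _ _⟩ <;> intros <;>
      simp [lh, (F.Dm_lin _).map_add, (F.Dm_lin _).map_smul, F.Dm_conf]
  have hrt : IsConformalBilin DQ DR DR rt := by
    refine ⟨?_, ?_, ?_, ?_, fun y a => polyL _ (F.Tm_poly a) y, ?_, ?_⟩ <;> intros <;>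
      simp [rt, (F.Tm_lin _).map_add, (F.Tm_lin _).map_smul, F.Tm_conf, hκD, mul_smul, add_smul]
    all_goals exact smul_comm _ _ _
  have hfm : IsConformalBilin DQ DQ DR fm := by
    refine ⟨?_, ?_, ?_, ?_, fun y z => polyL _ (polyR _ F.Q0_poly z) y, ?_, fun l a b => ?_⟩
    rotate_right
    · simp only [fm, sh, map_smul]
      module
    all_goals intros
    all_goals simp only [fm, map_add, map_smul, eval_add, eval_smul, add_comp, smul_comp, LinearMap.add_apply, LinearMap.smul_apply, smul_eq_mul, hκD, eval_mul, eval_X]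
    all_goals module
  have datum : IsExtendingDatum DR DQ lh (fun _ _ _ => 0) (fun _ _ _ => 0) rt fm bq :=
    ⟨hlh, .zero, .zero, hrt, hfm, hbq.bilin⟩
  have lhx : ∀ l a, lh l a x = F.Dm l a := by intro l a; simp [lh, hκ1]
  have rtx : ∀ l a, rt l x a = F.Tm l a := by intro l a; simp [rt, hκ1]
  have fmx : ∀ l, fm l x x = F.Q0 l := by intro l; simp [fm, hκ1]
  obtain ⟨f1, f2, f3, f4, f5, f6, f7, f8⟩ := hF
  have hb := hLeib.bilin
  have hq := hbq.bilin
  clear_value lh rt fm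
  refine ⟨⟨lh, rt, fm, datum, ?_⟩, fcdata_ext lhx rtx fmx rfl⟩
  apply jac_gen (unified_bilin hb datum) (gen_prod DR hg)
  have xxx : ∀ l m, bq l x (bq m x x) = _ := fun l m => hbq.jacobi l m x x x
  rintro l m _ (⟨a, rfl⟩ | rfl) _ (⟨b, rfl⟩ | rfl) _ (⟨c, rfl⟩ | rfl) <;> ext <;>
  simp only [unifiedBracket, Prod.fst_add, Prod.snd_add, hb.zero_left, hb.zero_right, hlh.zero_left, hlh.zero_right, hrt.zero_left,
    hrt.zero_right, hfm.zero_left, hfm.zero_right, hq.zero_left, hq.zero_right, add_zero,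
    zero_add]
  · exact hLeib.jacobi l m a b c
  · rw [lhx, lhx, lhx, f1]; abel
  · simp only [rtx, lhx, f2]; abel
  · simp only [rtx, lhx, fmx, hP, hlh.aeval_right, ← sub2_shift, f4]; abel
  · simp only [rtx, f3, add_comm m l]; abel
  · simp only [rtx, lhx, fmx, hP, hlh.aeval_right, ← sub2_shift, f4]
    have := f5 m l b
    rw [add_comm m l] at this ⊢
    rw [eq_neg_of_add_eq_zero_left this]; abel
  · have := f7 l m c
    simp only [rtx, fmx, hP, hrt.aeval_left, ev2_eq] at this ⊢
    rw [show -(l + m) = -l - m by ring, this]; abel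
  · have := f8 l m
    simp only [rtx, lhx, fmx, hP, hfm.aeval_left, hfm.aeval_right, ev2_eq, sub2_shift] at this ⊢
    rw [show -(l + m) = -l - m by ring, this]; abel
  · exact xxx l m

theorem equiv_of_inner (hLeib : IsLeibnizConformal DR br)
    (hcenter : ∀ a : R, (∀ (l : ℂ) (b : R), br l a b = 0) → a = 0)
    (hQfree : ∀ q : Q, ∃! p : Polynomial ℂ, Polynomial.aeval DQ p x = q)
    (hbq : IsLeibnizConformal DQ bq) {P : CPoly2}
    (hP : ∀ l, bq l x x = Polynomial.aeval DQ (sub2 P (C l) X) x)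
    (β : ℂ) (hβ0 : β ≠ 0) (hβ : β = 1 ∨ (P = 0 ∧ ∀ l y z, bq l y z = 0))
    (w : Q ≃ₗ[ℂ] Q) (hw : ∀ y, w y = β • y)
    (Ω Ω' : CrossedStruct R Q DR DQ br bq) (c : R)
    (hT : ∀ l a, Ω.rt l x a = β • Ω'.rt l x a + br l c a) :
    ∃ u : Q →ₗ[ℂ] R, DatumEquivVia DR DQ br Ω.lh (fun _ _ _ => 0) (fun _ _ _ => 0) Ω.rt Ω.fm bq
      Ω'.lh (fun _ _ _ => 0) (fun _ _ _ => 0) Ω'.rt Ω'.fm bq u w := by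
  obtain ⟨f1, f2, f3, f4, f5, f6, f7, f8⟩ := toFC_isFC hLeib hQfree hbq hP Ω
  obtain ⟨g1, g2, g3, g4, g5, g6, g7, g8⟩ := toFC_isFC hLeib hQfree hbq hP Ω'
  simp only [toFC] at f1 f2 f3 f4 f5 f6 f7 f8 g1 g2 g3 g4 g5 g6 g7 g8
  have hb := hLeib.bilin
  have hq := hbq.bilin
  have hlh := Ω.datum.lh_bilin
  have hrt := Ω.datum.rt_bilin
  have hfm := Ω.datum.fm_bilin
  have hlh' := Ω'.datum.lh_bilin
  have hrt' := Ω'.datum.rt_bilin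
  have hfm' := Ω'.datum.fm_bilin
  have cent : ∀ a a' : R, (∀ l b, br l a b = br l a' b) → a = a' := fun a a' h =>
    sub_eq_zero.1 (hcenter _ fun l b => by rw [hb.sub_left, h, sub_self])
  have hD : ∀ l a, Ω.lh l a x = br l a c + β • Ω'.lh l a x := by
    intro l a
    apply cent
    intro n b
    obtain ⟨m, rfl⟩ : ∃ m, n = l + m := ⟨n - l, by ring⟩
    have e1 := (f2 l m a b).symm.trans (f3 l m a b)
    have e2 := (g2 l m a b).symm.trans (g3 l m a b)
    rw [sub_eq_add_neg, add_left_cancel_iff, neg_eq_iff_eq_neg] at e1 e2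
    have e3 := hLeib.jacobi l m a c b
    have e4 := hLeib.jacobi m l c a b
    rw [e4, add_comm m l] at e3
    rw [e1, hb.add_left, hb.smul_left, e2, hT, hb.add_left, hb.smul_left]
    have e5 : br (l + m) (br m c a) b = - br (l + m) (br l a c) b := by
      linear_combination (norm := module) (-1 : ℂ) • e3
    rw [e5]; module
  have hQ : ∀ l, Ω.fm l x x = br l c c + β • Ω'.lh l c x + β • Ω'.rt l x c
      + (β * β) • Ω'.fm l x x - aeval DR (sub2 P (C l) X) c := by
    intro l
    apply cent
    intro n a
    obtain ⟨m, rfl⟩ : ∃ m, n = l + m := ⟨n - l, by ring⟩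
    have e1 := f7 l m a
    have e2 := g7 l m a
    have e3 := hLeib.jacobi l m c c a
    have e4 := g2 l m c a
    have e5 := g3 m l c a
    rw [add_comm m l] at e5
    simp only [hb.sub_left, hb.add_left, hb.smul_left, hb.aeval_left]
    rw [show -(l + m) = -l - m by ring, ← ev2_eq]
    simp only [hT, hrt'.add_right, hrt'.smul_right, hb.add_right, hb.smul_right] at e1
    have e1' : br (l + m) (Ω.fm l x x) a = β • β • (Ω'.rt l x (Ω'.rt m x a) - Ω'.rt m x (Ω'.rt l x a))
      + β • (Ω'.rt l x (br m c a) - br m c (Ω'.rt l x a)) + β • (br l c (Ω'.rt m x a) - Ω'.rt m x (br l c a))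
      + (br l c (br m c a) - br m c (br l c a))
      - ev2 P l (-l - m) • (β • Ω'.rt (l + m) x a + br (l + m) c a) := by
      linear_combination (norm := module) e1
    have e2' : Ω'.rt l x (Ω'.rt m x a) - Ω'.rt m x (Ω'.rt l x a) =
        br (l + m) (Ω'.fm l x x) a + ev2 P l (-l - m) • Ω'.rt (l + m) x a := by
      linear_combination (norm := module) (-1 : ℂ) • e2
    rw [e1', e2', e3, e4, e5]
    rcases hβ with rfl | ⟨rfl, -⟩
    · module
    · simp only [ev2, eval_zero]
      module
  obtain ⟨κ, hκ, hκ1, hκD⟩ := exists_coord hQfree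
  have hκu : ∀ p : ℂ[X], κ (aeval DQ p x) = p := fun p => (hQfree _).unique (hκ _) rfl
  let u : Q →ₗ[ℂ] R := ((LinearMap.applyₗ c).comp (aeval DR).toLinearMap).comp κ
  have hu : ∀ p : ℂ[X], u (aeval DQ p x) = aeval DR p c := by
    intro p
    show aeval DR (κ (aeval DQ p x)) c = _
    rw [hκu]
  clear_value u
  have hu2 : ∀ (p : ℂ[X]) (y : Q), u (aeval DQ p y) = aeval DR p (u y) := by
    intro p y
    obtain ⟨q, rfl, -⟩ := hQfree y
    rw [← Module.End.mul_apply, ← map_mul, hu, hu, map_mul, Module.End.mul_apply]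
  refine ⟨u, ?_, ?_, ?_, ?_, ?_, ?_, ?_, ?_⟩
  · intro q
    simpa using hu2 X q
  · intro q
    simp [hw]
  · simp
  · intro l a y
    obtain ⟨q, rfl, -⟩ := hQfree y
    rw [hw, hu, hlh'.smul_right, hlh.aeval_right, hlh'.aeval_right, hb.aeval_right, hD]
    simp
  · simp
  · intro l y a
    obtain ⟨q, rfl, -⟩ := hQfree y
    rw [hw, hu, hrt'.smul_left, hrt.aeval_left, hrt'.aeval_left, hb.aeval_left, hT]
    simp only [map_zero]
    module
  · intro l y z
    simp only [map_zero, zero_add]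
    rw [LinearEquiv.eq_symm_apply]
    simp only [hw, hq.smul_left, hq.smul_right]
    rcases hβ with rfl | ⟨-, h0⟩
    · simp
    · simp [h0]
  · intro l y z
    obtain ⟨p, rfl, -⟩ := hQfree y
    obtain ⟨q, rfl, -⟩ := hQfree z
    simp only [hw, hu, hu2, hP, map_smul, hb.aeval_left, hb.aeval_right, hlh'.aeval_left, hlh'.aeval_right, hlh'.smul_right,
      hrt'.aeval_left, hrt'.aeval_right, hrt'.smul_left, hfm.aeval_left, hfm.aeval_right,
      hfm'.aeval_left, hfm'.aeval_right, hfm'.smul_left, hfm'.smul_right, hq.aeval_left, hq.aeval_right, hQ, map_add, map_sub]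
    module

theorem w_scalar (hQfree : ∀ q : Q, ∃! p : Polynomial ℂ, Polynomial.aeval DQ p x = q)
    (w : Q ≃ₗ[ℂ] Q) (hw : ∀ q, w (DQ q) = DQ (w q)) :
    ∃ β : ℂ, β ≠ 0 ∧ ∀ y, w y = β • y := by
  have hw2 : ∀ q, w.symm (DQ q) = DQ (w.symm q) := fun q => by
    rw [LinearEquiv.symm_apply_eq, hw, LinearEquiv.apply_symm_apply]
  have comm : ∀ (f : Q →ₗ[ℂ] Q), (∀ q, f (DQ q) = DQ (f q)) → ∀ (p : ℂ[X]) (q : Q), f (aeval DQ p q) = aeval DQ p (f q) := by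
    intro f hf p q
    have : Commute (f : Module.End ℂ Q) DQ := LinearMap.ext hf
    have h2 : Commute (f : Module.End ℂ Q) (aeval DQ p) := by
      rw [aeval_eq_sum_range]
      exact Commute.sum_right _ _ _ fun i _ => (this.pow_right i).smul_right _
    exact LinearMap.congr_fun h2.eq q
  obtain ⟨p, hp, -⟩ := hQfree (w x)
  obtain ⟨q, hq, -⟩ := hQfree (w.symm x)
  have hpq : q * p = 1 := by
    apply (hQfree x).unique _ (by simp)
    simp only [map_mul, Module.End.mul_apply]
    have := comm w.toLinearMap hw q x
    simp only [LinearEquiv.coe_coe, hq, LinearEquiv.apply_symm_apply] at this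
    rw [hp, ← this]
  obtain ⟨β, hβ, hβp⟩ := Polynomial.isUnit_iff.1 (IsUnit.of_mul_eq_one_right q hpq)
  refine ⟨β, hβ.ne_zero, fun y => ?_⟩
  obtain ⟨r, rfl, -⟩ := hQfree y
  have := comm w.toLinearMap hw r x
  simp only [LinearEquiv.coe_coe] at this
  rw [this, ← hp, ← hβp]
  simp

theorem quot_bij {A B : Type*} {r : A → A → Prop} {s : B → B → Prop} (f : A → B)
    (hf : Function.Bijective f) (h : ∀ a b, r a b ↔ s (f a) (f b)) :
    ∃ G : Quot r → Quot s, Function.Bijective G ∧ ∀ a, G (Quot.mk _ a) = Quot.mk _ (f a) :=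
  ⟨_, (Quot.congr (Equiv.ofBijective f hf) h).bijective, fun _ => rfl⟩

theorem main_of (hLeib : IsLeibnizConformal DR br)
    (hQfree : ∀ q : Q, ∃! p : Polynomial ℂ, Polynomial.aeval DQ p x = q)
    (hbq : IsLeibnizConformal DQ bq) (P : CPoly2)
    (hP : ∀ l, bq l x x = Polynomial.aeval DQ (sub2 P (C l) X) x)
    (r : CrossedStruct R Q DR DQ br bq → CrossedStruct R Q DR DQ br bq → Prop)
    (s : {F : FCData R DR // IsFC DR br F ∧ F.P = P} → {F : FCData R DR // IsFC DR br F ∧ F.P = P} → Prop)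
    (hrs : ∀ Ω Ω', r Ω Ω' ↔ s ⟨toFC P x Ω, toFC_isFC hLeib hQfree hbq hP Ω, rfl⟩
      ⟨toFC P x Ω', toFC_isFC hLeib hQfree hbq hP Ω', rfl⟩) :
    ∃ G : Quot r → Quot s,
        Function.Bijective G ∧
        ∀ (Ω : CrossedStruct R Q DR DQ br bq)
          (F : {F : FCData R DR // IsFC DR br F ∧ F.P = P}),
          ((∀ (l : ℂ) (a : R), Ω.lh l a x = F.1.Dm l a) ∧
           (∀ (l : ℂ) (a : R), Ω.rt l x a = F.1.Tm l a) ∧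
           (∀ l : ℂ, Ω.fm l x x = F.1.Q0 l)) →
          G (Quot.mk _ Ω) = Quot.mk _ F := by
  let f : CrossedStruct R Q DR DQ br bq → {F : FCData R DR // IsFC DR br F ∧ F.P = P} :=
    fun Ω => ⟨toFC P x Ω, toFC_isFC hLeib hQfree hbq hP Ω, rfl⟩
  have hf : Function.Bijective f := by
    constructor
    · intro Ω Ω' h
      exact toFC_inj hQfree (congrArg Subtype.val h)
    · rintro ⟨F, hF, rfl⟩
      obtain ⟨Ω, h⟩ := toFC_surj hLeib hQfree hbq F hF hP
      exact ⟨Ω, Subtype.ext h⟩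
  obtain ⟨G, hG, hG2⟩ := quot_bij (r := r) (s := s) f hf hrs
  refine ⟨G, hG, fun Ω F ⟨h1, h2, h3⟩ => ?_⟩
  rw [hG2]
  congr 1
  exact Subtype.ext (fcdata_ext h1 h2 h3 F.2.2.symm)

end main
end Helpers

/-- Let `R = ℂ[∂]V` be a Lie conformal algebra with trivial left-center and
`Q = ℂ[∂]x` a rank-one Leibniz conformal algebra.  (1) If `Q` is abelian then
`LHC²_R(Q,R) ≅ FC(R)/≡` with `(D,T,Q₀,0) ≡ (D',T',Q₀',0)` iff `T - βT' ∈ CInn(R)` for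
some `β ≠ 0`.  (2) If `Q` is the Virasoro Lie conformal algebra then
`LHC²_R(Q,R) = LHC²(Q,R) ≅ FC(R)/≈` with `(D,T,Q₀,∂+2λ) ≈ (D',T',Q₀',∂+2λ)` iff
`T - T' ∈ CInn(R)`. -/
theorem lhc_classification_abelian_and_virasoro
    {R Q : Type*} [AddCommGroup R] [Module ℂ R] [AddCommGroup Q] [Module ℂ Q]
    (DR : Module.End ℂ R) (DQ : Module.End ℂ Q)
    (br : ℂ → R → R → R) (hLeib : IsLeibnizConformal DR br)
    (hskew : IsSkewSymmBr DR br)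
    (hcenter : ∀ a : R, (∀ (l : ℂ) (b : R), br l a b = 0) → a = 0)
    (ι : Type*) (v : ι → R)
    (hRfree : ∀ a : R, ∃! c : ι →₀ Polynomial ℂ,
      (c.sum fun i p => Polynomial.aeval DR p (v i)) = a)
    (x : Q) (hQfree : ∀ q : Q, ∃! p : Polynomial ℂ, Polynomial.aeval DQ p x = q)
    (bq : ℂ → Q → Q → Q) (hbq : IsLeibnizConformal DQ bq) :
    -- (1) the abelian case
    ((∀ (l : ℂ) (y z : Q), bq l y z = 0) →
      ∃ G : Quot (crossedEquiv DR DQ br bq) → Quot (fcRelAb DR br),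
        Function.Bijective G ∧
        ∀ (Ω : CrossedStruct R Q DR DQ br bq)
          (F : {F : FCData R DR // IsFC DR br F ∧ F.P = 0}),
          ((∀ (l : ℂ) (a : R), Ω.lh l a x = F.1.Dm l a) ∧
           (∀ (l : ℂ) (a : R), Ω.rt l x a = F.1.Tm l a) ∧
           (∀ l : ℂ, Ω.fm l x x = F.1.Q0 l)) →
          G (Quot.mk _ Ω) = Quot.mk _ F) ∧
    -- (2) the Virasoro case
    ((∀ l : ℂ, bq l x x = DQ x + (2 * l) • x) →
      (∃ G : Quot (crossedEquiv DR DQ br bq) → Quot (fcRelVir DR br),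
        Function.Bijective G ∧
        ∀ (Ω : CrossedStruct R Q DR DQ br bq)
          (F : {F : FCData R DR // IsFC DR br F ∧ F.P = virasoroP}),
          ((∀ (l : ℂ) (a : R), Ω.lh l a x = F.1.Dm l a) ∧
           (∀ (l : ℂ) (a : R), Ω.rt l x a = F.1.Tm l a) ∧
           (∀ l : ℂ, Ω.fm l x x = F.1.Q0 l)) →
          G (Quot.mk _ Ω) = Quot.mk _ F) ∧
      (∃ G : Quot (crossedCohom DR DQ br bq) → Quot (fcRelVir DR br),
        Function.Bijective G ∧
        ∀ (Ω : CrossedStruct R Q DR DQ br bq)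
          (F : {F : FCData R DR // IsFC DR br F ∧ F.P = virasoroP}),
          ((∀ (l : ℂ) (a : R), Ω.lh l a x = F.1.Dm l a) ∧
           (∀ (l : ℂ) (a : R), Ω.rt l x a = F.1.Tm l a) ∧
           (∀ l : ℂ, Ω.fm l x x = F.1.Q0 l)) →
          G (Quot.mk _ Ω) = Quot.mk _ F)) := by
  have hinner : ∀ (Ω Ω' : CrossedStruct R Q DR DQ br bq) (u : Q →ₗ[ℂ] R) (w : Q ≃ₗ[ℂ] Q) (β : ℂ),
      w x = β • x →
      DatumEquivVia DR DQ br Ω.lh (fun _ _ _ => 0) (fun _ _ _ => 0) Ω.rt Ω.fm bq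
      Ω'.lh (fun _ _ _ => 0) (fun _ _ _ => 0) Ω'.rt Ω'.fm bq u w →
      ∀ l a, Ω.rt l x a - β • Ω'.rt l x a = br l (u x) a := by
    intro Ω Ω' u w β hw h l a
    have := h.2.2.2.2.2.1 l x a
    rw [this, hw, Ω'.datum.rt_bilin.smul_left, map_zero]
    abel
  constructor
  · intro h0
    have hP : ∀ l, bq l x x = Polynomial.aeval DQ (sub2 (0 : CPoly2) (C l) X) x := by
      intro l; simp [h0, sub2]
    apply main_of hLeib hQfree hbq 0 hP
    intro Ω Ω'
    constructor
    · rintro ⟨u, w, h⟩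
      obtain ⟨β, hβ, hw⟩ := w_scalar hQfree w h.2.1
      exact ⟨β, hβ, u x, hinner Ω Ω' u w β (hw x) h⟩
    · rintro ⟨β, hβ, c, hT⟩
      obtain ⟨u, hu⟩ := equiv_of_inner hLeib hcenter hQfree hbq hP β hβ (Or.inr ⟨rfl, h0⟩)
        (LinearEquiv.smulOfNeZero ℂ Q β hβ) (fun y => rfl) Ω Ω' c
        (fun l a => by have := hT l a; simp only [toFC] at this; rw [← this]; abel)
      exact ⟨u, _, hu⟩
  · intro hv
    have hP : ∀ l, bq l x x = Polynomial.aeval DQ (sub2 virasoroP (C l) X) x := by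
      intro l
      have : sub2 virasoroP (C l) X = X + C (2 * l) := by
        simp only [sub2, virasoroP, eval₂_add, eval₂_C, eval₂_smul, eval₂_X]
        have h2 : ((2 : ℂ) • (X : CPoly2)) = C (C 2) * X := by
          ext : 1
          simp [Polynomial.coeff_smul, Polynomial.smul_eq_C_mul]
        rw [h2]
        simp
      rw [hv, this]
      simp [-map_mul]
    have hDx : DQ x ≠ 0 := by
      intro h
      have : (X : ℂ[X]) = 0 := (hQfree 0).unique (by simpa using h) (by simp)
      exact X_ne_zero this
    have back : ∀ (Ω Ω' : CrossedStruct R Q DR DQ br bq) (c : R),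
        (∀ l a, Ω.rt l x a - Ω'.rt l x a = br l c a) → crossedCohom DR DQ br bq Ω Ω' := by
      intro Ω Ω' c hT
      exact equiv_of_inner hLeib hcenter hQfree hbq hP 1 one_ne_zero (Or.inl rfl)
        (LinearEquiv.refl ℂ Q) (fun y => by simp) Ω Ω' c
        (fun l a => by rw [← hT l a, one_smul]; abel)
    constructor
    · apply main_of hLeib hQfree hbq virasoroP hP
      intro Ω Ω'
      constructor
      · rintro ⟨u, w, h⟩
        obtain ⟨β, hβ, hw⟩ := w_scalar hQfree w h.2.1
        have hb := h.2.2.2.2.2.2.1 0 x x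
        simp only [map_zero, zero_add] at hb
        rw [LinearEquiv.eq_symm_apply, hw, hw, hbq.bilin.smul_left, hbq.bilin.smul_right, hv] at hb
        simp only [mul_zero, zero_smul, add_zero] at hb
        have hb2 : (β * (1 - β)) • DQ x = 0 := by
          rw [← sub_eq_zero] at hb
          rw [← hb]; module
        have hβ1 : β = 1 := by
          rcases smul_eq_zero.1 hb2 with h | h
          · rcases mul_eq_zero.1 h with h | h
            · exact absurd h hβ
            · exact (sub_eq_zero.1 h).symm
          · exact absurd h hDx
        subst hβ1
        exact ⟨u x, fun l a => by simpa [toFC] using hinner Ω Ω' u w 1 (hw x) h l a⟩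
      · rintro ⟨c, hT⟩
        obtain ⟨u, hu⟩ := back Ω Ω' c hT
        exact ⟨u, _, hu⟩
    · apply main_of hLeib hQfree hbq virasoroP hP
      intro Ω Ω'
      constructor
      · rintro ⟨u, h⟩
        exact ⟨u x, fun l a => by simpa [toFC] using hinner Ω Ω' u _ 1 (by simp) h l a⟩
      · rintro ⟨c, hT⟩
        exact back Ω Ω' c hT
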